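/- arXiv:1106.5573 — 3 statements merged into one kernel-verified Lean document; each statement's English description precedes it below -/
import Mathlib

section
/- Let b ≥ 3. The period domain D is nonempty and path-connected in the subspace topology inherited from ℙ(ℂ^b). -/
noncomputable section

open scoped BigOperators

def eps {b : ℕ} (i : Fin b) : ℝ := if (i : ℕ) < 3 then 1 else -1

def bR {b : ℕ} (v w : Fin b → ℝ) : ℝ := ∑ i, eps i * v i * w i

def qR {b : ℕ} (v : Fin b → ℝ) : ℝ := bR v v

def bC {b : ℕ} (z w : Fin b → ℂ) : ℂ := ∑ i, (eps i : ℂ) * z i * w i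

def qC {b : ℕ} (z : Fin b → ℂ) : ℂ := bC z z

def conjVec {b : ℕ} (z : Fin b → ℂ) : Fin b → ℂ := fun i => (starRingEnd ℂ) (z i)

def rePart {b : ℕ} (z : Fin b → ℂ) : Fin b → ℝ := fun i => (z i).re
def imPart {b : ℕ} (z : Fin b → ℂ) : Fin b → ℝ := fun i => (z i).im

def cplx {b : ℕ} (v : Fin b → ℝ) : Fin b → ℂ := fun i => (v i : ℂ)

def isPeriodVec {b : ℕ} (z : Fin b → ℂ) : Prop :=
  qC z = 0 ∧ 0 < (bC z (conjVec z)).re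

instance projectivizationTopology (K V : Type*) [DivisionRing K] [AddCommGroup V] [Module K V]
    [TopologicalSpace V] : TopologicalSpace (Projectivization K V) :=
  inferInstanceAs (TopologicalSpace (Quotient (projectivizationSetoid K V)))

def periodDomain (b : ℕ) : Set (Projectivization ℂ (Fin b → ℂ)) :=
  {x | ∃ (z : Fin b → ℂ) (hz : z ≠ 0), Projectivization.mk ℂ z hz = x ∧ isPeriodVec z}

def Pspan {b : ℕ} (z : Fin b → ℂ) : Submodule ℝ (Fin b → ℝ) :=
  Submodule.span ℝ {rePart z, imPart z}

def PosDefOn {b : ℕ} (W : Submodule ℝ (Fin b → ℝ)) : Prop :=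
  ∀ v ∈ W, v ≠ 0 → 0 < qR v

def twistorLine {b : ℕ} (W : Submodule ℝ (Fin b → ℝ)) :
    Set (Projectivization ℂ (Fin b → ℂ)) :=
  {x | ∃ (z : Fin b → ℂ) (hz : z ≠ 0), Projectivization.mk ℂ z hz = x ∧ isPeriodVec z ∧
    rePart z ∈ W ∧ imPart z ∈ W}

/-- `W^⊥ ∩ Λ = {0}`: the twistor line / three-space `W` is generic w.r.t. `Λ`. -/
def IsGenericW {b : ℕ} (Λ : AddSubgroup (Fin b → ℝ)) (W : Submodule ℝ (Fin b → ℝ)) : Prop :=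
  ∀ α ∈ Λ, (∀ w ∈ W, bR α w = 0) → α = 0

def bRlin {b : ℕ} (p : Fin b → ℝ) : (Fin b → ℝ) →ₗ[ℝ] ℝ where
  toFun v := bR v p
  map_add' x y := by
    unfold bR
    rw [← Finset.sum_add_distrib]
    exact Finset.sum_congr rfl fun i _ => by simp [Pi.add_apply]; ring
  map_smul' c x := by
    show bR (c • x) p = (RingHom.id ℝ) c • bR x p
    unfold bR
    rw [RingHom.id_apply, smul_eq_mul, Finset.mul_sum]
    exact Finset.sum_congr rfl fun i _ => by simp [Pi.smul_apply]; ring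

def perpSubmodule {b : ℕ} (P : Submodule ℝ (Fin b → ℝ)) : Submodule ℝ (Fin b → ℝ) :=
  ⨅ p ∈ P, LinearMap.ker (bRlin p)

/-!
A period vector `z = x + iy` is the same thing as an orthogonal pair `(x, y)` of vectors of equal
positive square. Such pairs are a retract, by Gram–Schmidt, of the bases `(x, y)` of positive
definite planes, and their classes fill the period domain, so it suffices to connect any two such
bases. Shrinking the negative components of `x` and `y` linearly to zero only increases the form,
hence keeps the plane positive definite, and ends with a basis of a plane in the positive definite
three-space. In a space of dimension at least three any two linearly independent pairs can be joined
by moving one vector at a time, because the complement of a line is path-connected there.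
-/

section RankGreaterThanTwo

variable {K V : Type*} [DivisionRing K] [AddCommGroup V] [Module K V]

theorem exists_notMem_span_pair (hV : 2 < Module.rank K V) (x y : V) :
    ∃ z, z ∉ Submodule.span K {x, y} := by
  by_contra! h
  have hspan : Submodule.span K ({x, y} : Set V) = ⊤ := eq_top_iff.2 fun z _ => h z
  have hrank : Module.rank K (Submodule.span K {x, y}) ≤ 2 :=
    (rank_span_le _).trans <| by
      simpa [one_add_one_eq_two] using Cardinal.mk_insert_le (s := {y}) (a := x)
  rw [hspan, rank_top] at hrank
  exact hV.not_ge hrank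

theorem exists_linearIndependent_pair_and_pair (hV : 2 < Module.rank K V) {x y : V}
    (hx : x ≠ 0) (hy : y ≠ 0) :
    ∃ z, LinearIndependent K ![x, z] ∧ LinearIndependent K ![y, z] := by
  obtain ⟨z, hz⟩ := exists_notMem_span_pair hV x y
  refine ⟨z, (LinearIndependent.pair_iff' hx).2 ?_, (LinearIndependent.pair_iff' hy).2 ?_⟩ <;>
  · rintro a rfl
    exact hz (Submodule.smul_mem _ _ (Submodule.subset_span (by simp)))

theorem one_lt_rank_quotient_span_singleton (hV : 2 < Module.rank K V) (x : V) :
    1 < Module.rank K (V ⧸ Submodule.span K {x}) := by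
  by_contra! h
  have hspan : Module.rank K (Submodule.span K {x}) ≤ 1 := by
    simpa using rank_span_le (R := K) ({x} : Set V)
  have hsum := add_le_add h hspan
  rw [Submodule.rank_quotient_add_rank, one_add_one_eq_two] at hsum
  exact hV.not_ge hsum

end RankGreaterThanTwo

section LinearIndependentPairs

variable {E : Type*} [AddCommGroup E] [Module ℝ E] [TopologicalSpace E] [IsTopologicalAddGroup E]
  [ContinuousSMul ℝ E]

theorem joinedIn_linearIndependent_pair_snd (hE : 2 < Module.rank ℝ E) {x y z : E}
    (hy : LinearIndependent ℝ ![x, y]) (hz : LinearIndependent ℝ ![x, z]) :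
    JoinedIn {p : E × E | LinearIndependent ℝ ![p.1, p.2]} (x, y) (x, z) := by
  have hx : x ≠ 0 := hy.ne_zero 0
  have mem_compl_iff (w : E) :
      w ∈ (Submodule.span ℝ {x} : Set E)ᶜ ↔ LinearIndependent ℝ ![x, w] := by
    simp [LinearIndependent.pair_iff' hx, Submodule.mem_span_singleton]
  have hjoined := (isPathConnected_compl_of_one_lt_codim
    (one_lt_rank_quotient_span_singleton hE x)).joinedIn
      y ((mem_compl_iff y).2 hy) z ((mem_compl_iff z).2 hz)
  refine (hjoined.map (Continuous.prodMk_right x)).mono ?_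
  rintro _ ⟨w, hw, rfl⟩
  exact (mem_compl_iff w).1 hw

theorem joinedIn_linearIndependent_pair_fst (hE : 2 < Module.rank ℝ E) {x y z : E}
    (hx : LinearIndependent ℝ ![x, z]) (hy : LinearIndependent ℝ ![y, z]) :
    JoinedIn {p : E × E | LinearIndependent ℝ ![p.1, p.2]} (x, z) (y, z) := by
  refine ((joinedIn_linearIndependent_pair_snd hE (LinearIndependent.pair_symm_iff.1 hx)
    (LinearIndependent.pair_symm_iff.1 hy)).map continuous_swap).mono ?_
  rintro _ ⟨p, hp, rfl⟩
  exact LinearIndependent.pair_symm_iff.1 hp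

theorem isPathConnected_setOf_linearIndependent_pair (hE : 2 < Module.rank ℝ E) :
    IsPathConnected {p : E × E | LinearIndependent ℝ ![p.1, p.2]} := by
  have : Nontrivial E := rank_pos_iff_nontrivial.1 (zero_lt_two.trans hE)
  obtain ⟨x₀, hx₀⟩ := exists_ne (0 : E)
  obtain ⟨y₀, hy₀⟩ :=
    exists_linearIndependent_pair_of_one_lt_rank (Cardinal.one_lt_two.trans hE) hx₀
  refine isPathConnected_iff.2 ⟨⟨(x₀, y₀), hy₀⟩, ?_⟩
  rintro ⟨x, y⟩ hxy ⟨x', y'⟩ hxy'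
  obtain ⟨z, hz, hz'⟩ :=
    exists_linearIndependent_pair_and_pair hE (hxy.ne_zero 0) (hxy'.ne_zero 0)
  exact ((joinedIn_linearIndependent_pair_snd hE hxy hz).trans
    (joinedIn_linearIndependent_pair_fst hE hz hz')).trans
      (joinedIn_linearIndependent_pair_snd hE hz' hxy')

end LinearIndependentPairs

section PositivePairs

variable {E : Type*} [AddCommGroup E] [Module ℝ E] {B : LinearMap.BilinForm ℝ E}

/-- The bases of the planes on which `B` is positive definite. Quantifying over coefficients rather
than over the span makes linear independence automatic. -/
def positivePairs (B : LinearMap.BilinForm ℝ E) : Set (E × E) :=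
  {p | ∀ s t : ℝ, (s, t) ≠ 0 → 0 < B (s • p.1 + t • p.2) (s • p.1 + t • p.2)}

theorem linearIndependent_of_mem_positivePairs {p : E × E} (hp : p ∈ positivePairs B) :
    LinearIndependent ℝ ![p.1, p.2] := by
  refine LinearIndependent.pair_iff.2 fun s t hst => ?_
  by_contra hne
  simpa [hst] using hp s t (by simpa using hne)

theorem mem_positivePairs_of_linearIndependent {P : Submodule ℝ E}
    (hP : ∀ x ∈ P, x ≠ 0 → 0 < B x x) {p : P × P} (hp : LinearIndependent ℝ ![p.1, p.2]) :
    ((p.1 : E), (p.2 : E)) ∈ positivePairs B := by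
  intro s t hst
  refine hP _ (s • p.1 + t • p.2).2 fun hzero => hst ?_
  have := LinearIndependent.pair_iff.1 hp s t (Subtype.ext hzero)
  exact Prod.ext this.1 this.2

theorem apply_add_le_apply_add_smul (hB : B.IsSymm) {x n : E} (horth : B x n = 0)
    (hn : B n n ≤ 0) {r : ℝ} (hr : r ∈ Set.Icc 0 1) :
    B (x + n) (x + n) ≤ B (x + r • n) (x + r • n) := by
  have hr_sq : r * r ≤ 1 := mul_le_one₀ hr.2 hr.1 hr.2
  simp only [map_add, LinearMap.add_apply, map_smul, LinearMap.smul_apply, smul_eq_mul, horth,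
    hB.eq n x]
  nlinarith

theorem add_smul_mem_positivePairs (hB : B.IsSymm) {P N : Submodule ℝ E}
    (horth : ∀ x ∈ P, ∀ n ∈ N, B x n = 0) (hN : ∀ n ∈ N, B n n ≤ 0)
    {x y m n : E} (hx : x ∈ P) (hy : y ∈ P) (hm : m ∈ N) (hn : n ∈ N)
    (h : (x + m, y + n) ∈ positivePairs B) {r : ℝ} (hr : r ∈ Set.Icc 0 1) :
    (x + r • m, y + r • n) ∈ positivePairs B := by
  intro s t hst
  have hxy : s • x + t • y ∈ P := P.add_mem (P.smul_mem s hx) (P.smul_mem t hy)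
  have hmn : s • m + t • n ∈ N := N.add_mem (N.smul_mem s hm) (N.smul_mem t hn)
  have hsplit (c : ℝ) : s • (x + c • m) + t • (y + c • n) =
      (s • x + t • y) + c • (s • m + t • n) := by module
  have hpos := h s t hst
  have hsplit_one := hsplit 1
  simp only [one_smul] at hsplit_one
  simp only [hsplit_one] at hpos
  simp only [hsplit]
  exact hpos.trans_le (apply_add_le_apply_add_smul hB (horth _ hxy _ hmn) (hN _ hmn) hr)

variable [TopologicalSpace E] [IsTopologicalAddGroup E] [ContinuousSMul ℝ E]

theorem joinedIn_positivePairs_add (hB : B.IsSymm) {P N : Submodule ℝ E}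
    (horth : ∀ x ∈ P, ∀ n ∈ N, B x n = 0) (hN : ∀ n ∈ N, B n n ≤ 0)
    {x y m n : E} (hx : x ∈ P) (hy : y ∈ P) (hm : m ∈ N) (hn : n ∈ N)
    (h : (x + m, y + n) ∈ positivePairs B) :
    JoinedIn (positivePairs B) (x, y) (x + m, y + n) := by
  refine JoinedIn.ofLine (f := fun r : ℝ => (x + r • m, y + r • n)) (by fun_prop)
    (by simp) (by simp) ?_
  rintro _ ⟨r, hr, rfl⟩
  exact add_smul_mem_positivePairs hB horth hN hx hy hm hn h hr

theorem isPathConnected_positivePairs (hB : B.IsSymm) {P N : Submodule ℝ E}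
    (hrank : 2 < Module.rank ℝ P) (hPN : Codisjoint P N)
    (horth : ∀ x ∈ P, ∀ n ∈ N, B x n = 0) (hP : ∀ x ∈ P, x ≠ 0 → 0 < B x x)
    (hN : ∀ n ∈ N, B n n ≤ 0) :
    IsPathConnected (positivePairs B) := by
  let incl : P × P → E × E := fun p => (p.1, p.2)
  have hframes : IsPathConnected (incl '' {p | LinearIndependent ℝ ![p.1, p.2]}) :=
    (isPathConnected_setOf_linearIndependent_pair hrank).image (by fun_prop)
  have hsub : incl '' {p | LinearIndependent ℝ ![p.1, p.2]} ⊆ positivePairs B := by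
    rintro _ ⟨p, hp, rfl⟩
    exact mem_positivePairs_of_linearIndependent hP hp
  have hjoined_frame : ∀ q ∈ positivePairs B, ∃ p ∈ incl '' {p | LinearIndependent ℝ ![p.1, p.2]},
      JoinedIn (positivePairs B) p q := by
    rintro ⟨u, v⟩ huv
    obtain ⟨x, m, hx, hm, rfl⟩ := Submodule.codisjoint_iff_exists_add_eq.1 hPN u
    obtain ⟨y, n, hy, hn, rfl⟩ := Submodule.codisjoint_iff_exists_add_eq.1 hPN v
    have hjoined := joinedIn_positivePairs_add hB horth hN hx hy hm hn huv
    have hindep := linearIndependent_of_mem_positivePairs hjoined.source_mem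
    refine ⟨(x, y), ⟨(⟨x, hx⟩, ⟨y, hy⟩), ?_, rfl⟩, hjoined⟩
    exact LinearIndependent.pair_iff.2 fun s t hst =>
      LinearIndependent.pair_iff.1 hindep s t (congrArg Subtype.val hst)
  refine isPathConnected_iff.2 ⟨hframes.nonempty.mono hsub, fun q hq q' hq' => ?_⟩
  obtain ⟨p, hp, hpq⟩ := hjoined_frame q hq
  obtain ⟨p', hp', hpq'⟩ := hjoined_frame q' hq'
  exact (hpq.symm.trans ((hframes.joinedIn p hp p' hp').mono hsub)).trans hpq'

end PositivePairs

section ConformalPairs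

variable {E : Type*} [AddCommGroup E] [Module ℝ E] {B : LinearMap.BilinForm ℝ E}

/-- The orthogonal pairs of equal positive square: the real and imaginary parts of the period
vectors, see `isPeriodVec_iff_mem_conformalPairs`. -/
def conformalPairs (B : LinearMap.BilinForm ℝ E) : Set (E × E) :=
  {p | B p.1 p.1 = B p.2 p.2 ∧ B p.1 p.2 = 0 ∧ 0 < B p.1 p.1}

/-- The component of `y` orthogonal to `x`. -/
def orthogonalPart (B : LinearMap.BilinForm ℝ E) (x y : E) : E := y - (B x y / B x x) • x

/-- Gram–Schmidt for pairs, normalised so that the first vector acquires the length of the second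
instead of length one; this makes the map a retraction of `positivePairs B` onto
`conformalPairs B`. -/
def conformalRetraction (B : LinearMap.BilinForm ℝ E) (p : E × E) : E × E :=
  (√(B (orthogonalPart B p.1 p.2) (orthogonalPart B p.1 p.2) / B p.1 p.1) • p.1,
    orthogonalPart B p.1 p.2)

theorem apply_fst_self_pos {p : E × E} (hp : p ∈ positivePairs B) : 0 < B p.1 p.1 := by
  simpa using hp 1 0 (by simp)

theorem apply_orthogonalPart {x : E} (hx : B x x ≠ 0) (y : E) : B x (orthogonalPart B x y) = 0 := by
  simp [orthogonalPart, hx]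

theorem apply_orthogonalPart_self_pos {p : E × E} (hp : p ∈ positivePairs B) :
    0 < B (orthogonalPart B p.1 p.2) (orthogonalPart B p.1 p.2) := by
  have heq : orthogonalPart B p.1 p.2 = -(B p.1 p.2 / B p.1 p.1) • p.1 + (1 : ℝ) • p.2 := by
    unfold orthogonalPart
    module
  rw [heq]
  exact hp _ 1 (by simp)

theorem conformalRetraction_mem {p : E × E} (hp : p ∈ positivePairs B) :
    conformalRetraction B p ∈ conformalPairs B := by
  have hfst := apply_fst_self_pos hp
  have hsnd := apply_orthogonalPart_self_pos hp
  have hsquare : B (conformalRetraction B p).1 (conformalRetraction B p).1 =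
      B (orthogonalPart B p.1 p.2) (orthogonalPart B p.1 p.2) := by
    simp only [conformalRetraction, map_smul, LinearMap.smul_apply, smul_eq_mul]
    rw [← mul_assoc, Real.mul_self_sqrt (by positivity), div_mul_cancel₀ _ hfst.ne']
  refine ⟨hsquare, ?_, hsquare ▸ hsnd⟩
  simp [conformalRetraction, apply_orthogonalPart hfst.ne']

theorem conformalRetraction_eq_self {p : E × E} (hp : p ∈ conformalPairs B) :
    conformalRetraction B p = p := by
  obtain ⟨heq, horth, hpos⟩ := hp
  simp [conformalRetraction, orthogonalPart, horth, ← heq, hpos.ne']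

theorem conformalPairs_subset_positivePairs (hB : B.IsSymm) :
    conformalPairs B ⊆ positivePairs B := by
  rintro ⟨x, y⟩ ⟨heq, horth, hpos⟩ s t hst
  have hcoeff : 0 < s ^ 2 + t ^ 2 := by
    by_contra! h
    exact hst (Prod.ext (by dsimp; nlinarith) (by dsimp; nlinarith))
  calc 0 < (s ^ 2 + t ^ 2) * B x x := mul_pos hcoeff hpos
    _ = B (s • x + t • y) (s • x + t • y) := by
      simp only at heq horth
      simp only [map_add, map_smul, LinearMap.add_apply, LinearMap.smul_apply, smul_eq_mul,
        hB.eq y x, horth, ← heq]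
      ring

theorem conformalRetraction_image (hB : B.IsSymm) :
    conformalRetraction B '' positivePairs B = conformalPairs B :=
  Set.Subset.antisymm (Set.image_subset_iff.2 fun _ hp => conformalRetraction_mem hp)
    fun p hp => ⟨p, conformalPairs_subset_positivePairs hB hp, conformalRetraction_eq_self hp⟩

variable [TopologicalSpace E] [IsTopologicalAddGroup E] [ContinuousSMul ℝ E]

theorem continuousOn_conformalRetraction (hcont : Continuous fun p : E × E => B p.1 p.2) :
    ContinuousOn (conformalRetraction B) (positivePairs B) := by
  have hB {f g : E × E → E} (hf : ContinuousOn f (positivePairs B))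
      (hg : ContinuousOn g (positivePairs B)) :
      ContinuousOn (fun p => B (f p) (g p)) (positivePairs B) :=
    hcont.comp_continuousOn (hf.prodMk hg)
  have hne : ∀ p ∈ positivePairs B, B p.1 p.1 ≠ 0 := fun p hp => (apply_fst_self_pos hp).ne'
  have hfst : ContinuousOn (Prod.fst : E × E → E) (positivePairs B) := continuousOn_fst
  have hsnd : ContinuousOn (Prod.snd : E × E → E) (positivePairs B) := continuousOn_snd
  have horth : ContinuousOn (fun p : E × E => orthogonalPart B p.1 p.2) (positivePairs B) :=
    hsnd.sub (((hB hfst hsnd).div (hB hfst hfst) hne).smul hfst)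
  exact (((hB horth horth).div (hB hfst hfst) hne).sqrt.smul hfst).prodMk horth

theorem isPathConnected_conformalPairs (hB : B.IsSymm)
    (hcont : Continuous fun p : E × E => B p.1 p.2)
    (hpos : IsPathConnected (positivePairs B)) : IsPathConnected (conformalPairs B) :=
  conformalRetraction_image hB ▸ hpos.image' (continuousOn_conformalRetraction hcont)

end ConformalPairs

section PeriodForm

variable {b : ℕ}

theorem bR_comm (v w : Fin b → ℝ) : bR v w = bR w v :=
  Finset.sum_congr rfl fun _ _ => mul_right_comm _ _ _

/-- The standard symmetric bilinear form of signature `(3, b - 3)`, i.e. `bR` as a bundled bilinear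
form. -/
def periodForm (b : ℕ) : LinearMap.BilinForm ℝ (Fin b → ℝ) :=
  LinearMap.mk₂ ℝ bR (fun v w u => (bRlin u).map_add v w) (fun c v w => (bRlin w).map_smul c v)
    (fun v w u => by simp only [bR_comm v]; exact (bRlin v).map_add w u)
    (fun c v w => by simp only [bR_comm v]; exact (bRlin v).map_smul c w)

theorem periodForm_apply (v w : Fin b → ℝ) : periodForm b v w = ∑ i, eps i * v i * w i := rfl

theorem isSymm_periodForm : (periodForm b).IsSymm := ⟨bR_comm⟩

theorem continuous_periodForm :
    Continuous fun p : (Fin b → ℝ) × (Fin b → ℝ) => periodForm b p.1 p.2 := by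
  simp only [periodForm_apply]
  fun_prop

theorem periodForm_self_pos {x : Fin b → ℝ} (hx : x ∈ Pi.spanSubset ℝ {i : Fin b | (i : ℕ) < 3})
    (hne : x ≠ 0) : 0 < periodForm b x x := by
  rw [Pi.mem_spanSubset_iff] at hx
  have hterm (i : Fin b) : eps i * x i * x i = x i ^ 2 := by
    by_cases hi : (i : ℕ) < 3
    · simp [eps, hi, sq]
    · simp [hx i hi]
  obtain ⟨j, hj⟩ := Function.ne_iff.1 hne
  simp only [periodForm_apply, hterm]
  exact Finset.sum_pos' (fun i _ => sq_nonneg _) ⟨j, Finset.mem_univ j, sq_pos_of_ne_zero hj⟩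

theorem periodForm_self_nonpos {x : Fin b → ℝ}
    (hx : x ∈ Pi.spanSubset ℝ {i : Fin b | (i : ℕ) < 3}ᶜ) : periodForm b x x ≤ 0 := by
  rw [Pi.mem_spanSubset_iff] at hx
  rw [periodForm_apply]
  refine Finset.sum_nonpos fun i _ => ?_
  by_cases hi : (i : ℕ) < 3
  · simp [hx i (by simpa using hi)]
  · simpa [eps, hi] using mul_self_nonneg (x i)

theorem periodForm_eq_zero {s : Set (Fin b)} {x y : Fin b → ℝ} (hx : x ∈ Pi.spanSubset ℝ s)
    (hy : y ∈ Pi.spanSubset ℝ sᶜ) : periodForm b x y = 0 := by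
  rw [Pi.mem_spanSubset_iff] at hx hy
  rw [periodForm_apply]
  refine Finset.sum_eq_zero fun i _ => ?_
  by_cases hi : i ∈ s
  · simp [hy i (by simpa using hi)]
  · simp [hx i hi]

theorem codisjoint_spanSubset_compl {ι R : Type*} [Finite ι] [Semiring R] (s : Set ι) :
    Codisjoint (Pi.spanSubset R s) (Pi.spanSubset R sᶜ) := by
  rw [codisjoint_iff, Pi.spanSubset, Pi.spanSubset, ← Submodule.span_union, ← Set.image_union,
    Set.union_compl_self, Set.image_univ, Module.Basis.span_eq]

theorem finrank_spanSubset_val_lt {R : Type*} [Semiring R] [Nontrivial R] [StrongRankCondition R]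
    (b m : ℕ) :
    Module.finrank R (Pi.spanSubset R {i : Fin b | (i : ℕ) < m}) = min b m := by
  rw [Pi.dim_spanSubset, Set.ncard_eq_toFinset_card', Set.toFinset_ofPred, Fin.card_filter_val_lt]

theorem isPathConnected_positivePairs_periodForm (hb : 3 ≤ b) :
    IsPathConnected (positivePairs (periodForm b)) := by
  have hfinrank : 2 < Module.finrank ℝ (Pi.spanSubset ℝ {i : Fin b | (i : ℕ) < 3}) := by
    rw [finrank_spanSubset_val_lt]
    omega
  have hrank : 2 < Module.rank ℝ (Pi.spanSubset ℝ {i : Fin b | (i : ℕ) < 3}) :=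
    mod_cast Module.lt_rank_of_lt_finrank hfinrank
  exact isPathConnected_positivePairs isSymm_periodForm hrank (codisjoint_spanSubset_compl _)
    (fun _ hx _ hn => periodForm_eq_zero hx hn) (fun _ => periodForm_self_pos)
    (fun _ => periodForm_self_nonpos)

end PeriodForm

section PeriodVectors

variable {b : ℕ}

theorem qC_eq (z : Fin b → ℂ) :
    qC z = ⟨qR (rePart z) - qR (imPart z), 2 * bR (rePart z) (imPart z)⟩ := by
  apply Complex.ext
  · simp [qC, bC, qR, bR, rePart, imPart, ← Finset.sum_sub_distrib]
  · simp only [qC, bC, bR, rePart, imPart, Complex.im_sum, Finset.mul_sum]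
    refine Finset.sum_congr rfl fun i _ => ?_
    simp
    ring

theorem bC_conjVec_re (z : Fin b → ℂ) :
    (bC z (conjVec z)).re = qR (rePart z) + qR (imPart z) := by
  simp [bC, conjVec, qR, bR, rePart, imPart, ← Finset.sum_add_distrib]

theorem isPeriodVec_iff_mem_conformalPairs {z : Fin b → ℂ} :
    isPeriodVec z ↔ (rePart z, imPart z) ∈ conformalPairs (periodForm b) := by
  have hiff : isPeriodVec z ↔ qR (rePart z) = qR (imPart z) ∧ bR (rePart z) (imPart z) = 0 ∧
      0 < qR (rePart z) + qR (imPart z) := by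
    simp [isPeriodVec, qC_eq, bC_conjVec_re, Complex.ext_iff, sub_eq_zero, and_assoc]
  rw [hiff]
  refine and_congr_right fun heq => and_congr_right fun _ => ?_
  rw [← heq, ← two_mul, mul_pos_iff_of_pos_left two_pos]
  rfl

theorem ne_zero_of_isPeriodVec {z : Fin b → ℂ} (hz : isPeriodVec z) : z ≠ 0 := by
  rintro rfl
  simpa [bC] using hz.2

theorem isPathConnected_setOf_isPeriodVec (hb : 3 ≤ b) :
    IsPathConnected {z : Fin b → ℂ | isPeriodVec z} := by
  let toComplex : (Fin b → ℝ) × (Fin b → ℝ) → Fin b → ℂ :=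
    fun p => cplx p.1 + Complex.I • cplx p.2
  have himage : toComplex '' conformalPairs (periodForm b) = {z | isPeriodVec z} := by
    apply Set.Subset.antisymm
    · rintro _ ⟨p, hp, rfl⟩
      refine isPeriodVec_iff_mem_conformalPairs.2 ?_
      convert hp <;> ext i <;> simp [toComplex, rePart, imPart, cplx]
    · intro z hz
      refine ⟨_, isPeriodVec_iff_mem_conformalPairs.1 hz, ?_⟩
      ext i
      simp [toComplex, rePart, imPart, cplx, mul_comm Complex.I, Complex.re_add_im]
  rw [← himage]
  refine (isPathConnected_conformalPairs isSymm_periodForm continuous_periodForm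
    (isPathConnected_positivePairs_periodForm hb)).image ?_
  unfold toComplex cplx
  fun_prop

end PeriodVectors

theorem continuous_projectivization_mk' {K V : Type*} [DivisionRing K] [AddCommGroup V] [Module K V]
    [TopologicalSpace V] : Continuous (Projectivization.mk' K (V := V)) :=
  continuous_quotient_mk'

theorem periodDomain_eq_image (b : ℕ) :
    periodDomain b = Projectivization.mk' ℂ '' (Subtype.val ⁻¹' {z | isPeriodVec z}) := by
  ext x
  constructor
  · rintro ⟨z, hz, rfl, hperiod⟩
    exact ⟨⟨z, hz⟩, hperiod, rfl⟩
  · rintro ⟨⟨z, hz⟩, hperiod, rfl⟩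
    exact ⟨z, hz, rfl, hperiod⟩

theorem isPathConnected_periodDomain {b : ℕ} (hb : 3 ≤ b) : IsPathConnected (periodDomain b) := by
  rw [periodDomain_eq_image]
  exact ((isPathConnected_setOf_isPeriodVec hb).preimage_coe
    (U := {z | z ≠ 0}) fun _ => ne_zero_of_isPeriodVec).image continuous_projectivization_mk'

/-- For `b ≥ 3` the period domain is nonempty and path-connected. -/
theorem stmt0 (b : ℕ) (hb : 3 ≤ b) :
    (periodDomain b).Nonempty ∧ IsPathConnected (periodDomain b) :=
  ⟨(isPathConnected_periodDomain hb).nonempty, isPathConnected_periodDomain hb⟩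
end
end

section
/- Let b ≥ 3 and let [z], [w] ∈ D be two (not necessarily distinct) points. Then there exists a positive three-dimensional subspace W ⊆ ℝ^b with [z], [w] ∈ T_W if and only if q is positive definite on the subspace P(z) + P(w) of ℝ^b and dim_ℝ(P(z) + P(w)) ≤ 3. -/
noncomputable section

open scoped BigOperators

/-!
The plane `P(z)` depends only on the class `[z]`, so `[z]` lies on the twistor line of `W` exactly
when `P(z) ≤ W`. The theorem thus asks when `S = P(z) + P(w)` is contained in a positive subspace
of dimension three. If `S` is positive of dimension at most three and `U` is a positive subspace of
dimension three, then `U ∩ S^⊥` has dimension at least `3 - dim S`, because `S^⊥` has codimension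
at most `dim S`, and the sum of `S` with any subspace of `U ∩ S^⊥` is direct and positive.
-/

section PositiveSubspaces

open Module QuadraticMap

lemma exists_submodule_le_finrank_eq {R M : Type*} [Ring R] [StrongRankCondition R]
    [AddCommGroup M] [Module R M] (T : Submodule R M) {k : ℕ} (hk : k ≤ finrank R T) :
    ∃ T' ≤ T, finrank R T' = k := by
  have := nontrivial_of_invariantBasisNumber R
  obtain ⟨f, hf⟩ := exists_linearIndependent_of_le_finrank hk
  refine ⟨(Submodule.span R (Set.range f)).map T.subtype, Submodule.map_subtype_le _ _, ?_⟩
  rw [Submodule.finrank_map_subtype_eq, finrank_span_eq_card hf, Fintype.card_fin]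

lemma finrank_le_finrank_inf_orthogonal_add {K V : Type*} [Field K] [AddCommGroup V] [Module K V]
    [FiniteDimensional K V] (B : LinearMap.BilinForm K V) (U S : Submodule K V) :
    finrank K U ≤ finrank K ↥(U ⊓ B.orthogonal S) + finrank K S := by
  have h_inter := Submodule.finrank_sup_add_finrank_inf_eq U (B.orthogonal S)
  have h_sup := (U ⊔ B.orthogonal S).finrank_le
  have h_orth := LinearMap.BilinForm.finrank_add_finrank_orthogonal' (B := B) S
  lia

section OrderedRing

variable {R M N : Type*} [CommRing R] [AddCommGroup M] [AddCommGroup N] [Module R M] [Module R N]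
  [PartialOrder N] {Q : QuadraticMap R M N} {S T : Submodule R M}

lemma posDef_restrict_mono (hST : S ≤ T) (hT : (Q.restrict T).PosDef) : (Q.restrict S).PosDef :=
  fun x hx ↦ hT ⟨x, hST x.2⟩ (by simpa using hx)

variable [IsOrderedAddMonoid N]

lemma disjoint_of_posDef_restrict_of_isOrtho (hS : (Q.restrict S).PosDef)
    (hST : ∀ s ∈ S, ∀ t ∈ T, Q.IsOrtho s t) : Disjoint S T := by
  rw [Submodule.disjoint_def]
  intro x hxS hxT
  by_contra hx
  have hpos : 0 < Q x := hS ⟨x, hxS⟩ (by simpa using hx)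
  have hzero : 2 • Q x = 0 := (polar_self Q x).symm.trans (isOrtho_polarBilin.mpr (hST x hxS x hxT))
  exact (nsmul_pos hpos two_ne_zero).ne' hzero

lemma posDef_restrict_sup_of_isOrtho (hS : (Q.restrict S).PosDef) (hT : (Q.restrict T).PosDef)
    (hST : ∀ s ∈ S, ∀ t ∈ T, Q.IsOrtho s t) : (Q.restrict (S ⊔ T)).PosDef := by
  rintro ⟨x, hx⟩ hx0
  obtain ⟨s, hs, t, ht, rfl⟩ := Submodule.mem_sup.mp hx
  have hQ : Q (s + t) = Q s + Q t := isOrtho_def.mp (hST s hs t ht)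
  rw [restrict_apply, hQ]
  by_cases hs0 : s = 0
  · subst hs0
    simpa using hT ⟨t, ht⟩ (by simpa using hx0)
  · exact add_pos_of_pos_of_nonneg (hS ⟨s, hs⟩ (by simpa using hs0)) (hT.nonneg ⟨t, ht⟩)

end OrderedRing

variable {𝕜 V : Type*} [Field 𝕜] [LinearOrder 𝕜] [IsStrictOrderedRing 𝕜] [AddCommGroup V]
  [Module 𝕜 V] [FiniteDimensional 𝕜 V] {Q : QuadraticForm 𝕜 V} {S : Submodule 𝕜 V} {n : ℕ}

theorem exists_ge_finrank_eq_and_posDef_restrict (hS : (Q.restrict S).PosDef)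
    (hSn : finrank 𝕜 S ≤ n) (hn : n ≤ sigPos Q) :
    ∃ W ≥ S, finrank 𝕜 W = n ∧ (Q.restrict W).PosDef := by
  obtain ⟨U, hUdim, hU⟩ := exists_finrank_eq_sigPos_and_posDef Q
  have hdim := finrank_le_finrank_inf_orthogonal_add Q.polarBilin U S
  obtain ⟨T, hTle, hTdim⟩ := exists_submodule_le_finrank_eq
    (U ⊓ LinearMap.BilinForm.orthogonal Q.polarBilin S) (k := n - finrank 𝕜 S) (by lia)
  have hT : (Q.restrict T).PosDef := posDef_restrict_mono (hTle.trans inf_le_left) hU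
  have hST : ∀ s ∈ S, ∀ t ∈ T, Q.IsOrtho s t :=
    fun s hs t ht ↦ isOrtho_polarBilin.mp ((hTle ht).2 s hs)
  refine ⟨S ⊔ T, le_sup_left, ?_, posDef_restrict_sup_of_isOrtho hS hT hST⟩
  have hdisj : S ⊓ T = ⊥ := (disjoint_of_posDef_restrict_of_isOrtho hS hST).eq_bot
  have hdim_sup := Submodule.finrank_sup_add_finrank_inf_eq S T
  rw [hdisj, finrank_bot] at hdim_sup
  lia

theorem exists_finrank_eq_posDef_restrict_ge_iff (hn : n ≤ sigPos Q) :
    (∃ W : Submodule 𝕜 V, finrank 𝕜 W = n ∧ (Q.restrict W).PosDef ∧ S ≤ W) ↔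
      (Q.restrict S).PosDef ∧ finrank 𝕜 S ≤ n := by
  constructor
  · rintro ⟨W, hWn, hW, hSW⟩
    exact ⟨posDef_restrict_mono hSW hW, hWn ▸ Submodule.finrank_mono hSW⟩
  · rintro ⟨hS, hSn⟩
    obtain ⟨W, hSW, hWn, hW⟩ := exists_ge_finrank_eq_and_posDef_restrict hS hSn hn
    exact ⟨W, hWn, hW, hSW⟩

end PositiveSubspaces

section PeriodForm

open QuadraticMap

variable {b : ℕ}

lemma weightedSumSquares_eps_apply (v : Fin b → ℝ) : weightedSumSquares ℝ eps v = qR v := by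
  simp only [weightedSumSquares_apply, qR, bR, smul_eq_mul, mul_assoc]

lemma posDefOn_iff_posDef_restrict (W : Submodule ℝ (Fin b → ℝ)) :
    PosDefOn W ↔ ((weightedSumSquares ℝ eps).restrict W).PosDef := by
  simp only [PosDefOn, PosDef, restrict_apply, weightedSumSquares_eps_apply, Subtype.forall, ne_eq,
    Submodule.mk_eq_zero]

lemma sigPos_weightedSumSquares_eps :
    sigPos (weightedSumSquares ℝ (eps (b := b))) = min b 3 := by
  have hpos : {i : Fin b | 0 < eps i} = ↑({i | (i : ℕ) < 3} : Finset (Fin b)) := by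
    ext i
    by_cases hi : (i : ℕ) < 3 <;> simp [eps, hi]
  rw [QuadraticForm.sigPos_weightedSumSquares, hpos, Set.ncard_coe_finset, Fin.card_filter_val_lt]

end PeriodForm

section TwistorLine

variable {b : ℕ} {z w : Fin b → ℂ} {W : Submodule ℝ (Fin b → ℝ)}

lemma rePart_smul (a : ℂ) (z : Fin b → ℂ) :
    rePart (a • z) = a.re • rePart z - a.im • imPart z := by
  ext i
  simp [rePart, imPart]

lemma imPart_smul (a : ℂ) (z : Fin b → ℂ) :
    imPart (a • z) = a.re • imPart z + a.im • rePart z := by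
  ext i
  simp [rePart, imPart]

lemma Pspan_le_iff : Pspan z ≤ W ↔ rePart z ∈ W ∧ imPart z ∈ W := by
  rw [Pspan, Submodule.span_le, Set.pair_subset_iff, SetLike.mem_coe, SetLike.mem_coe]

lemma Pspan_smul_le (a : ℂ) (z : Fin b → ℂ) : Pspan (a • z) ≤ Pspan z := by
  obtain ⟨hre, him⟩ := Pspan_le_iff.mp (le_refl (Pspan z))
  rw [Pspan_le_iff, rePart_smul, imPart_smul]
  exact ⟨sub_mem (Submodule.smul_mem _ _ hre) (Submodule.smul_mem _ _ him),
    add_mem (Submodule.smul_mem _ _ him) (Submodule.smul_mem _ _ hre)⟩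

lemma Pspan_eq_of_mk_eq {hz : z ≠ 0} {hw : w ≠ 0}
    (h : Projectivization.mk ℂ z hz = Projectivization.mk ℂ w hw) : Pspan z = Pspan w := by
  obtain ⟨a, ha⟩ := (Projectivization.mk_eq_mk_iff' ℂ z w hz hw).mp h
  obtain ⟨c, hc⟩ := (Projectivization.mk_eq_mk_iff' ℂ w z hw hz).mp h.symm
  exact le_antisymm (ha ▸ Pspan_smul_le a w) (hc ▸ Pspan_smul_le c z)

lemma mk_mem_twistorLine_iff (hz : z ≠ 0) (hz' : isPeriodVec z) :
    Projectivization.mk ℂ z hz ∈ twistorLine W ↔ Pspan z ≤ W := by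
  constructor
  · rintro ⟨y, _, hyz, -, hy⟩
    exact (Pspan_eq_of_mk_eq hyz).ge.trans (Pspan_le_iff.mpr hy)
  · exact fun h ↦ ⟨z, hz, rfl, hz', Pspan_le_iff.mp h⟩

end TwistorLine

/-- two period points lie on a common twistor line iff `q` is positive
definite on `P(z) + P(w)` and this space has dimension at most 3. -/
theorem stmt6 (b : ℕ) (hb : 3 ≤ b) (z w : Fin b → ℂ) (hz : z ≠ 0) (hw : w ≠ 0)
    (hz' : isPeriodVec z) (hw' : isPeriodVec w) :
    (∃ W : Submodule ℝ (Fin b → ℝ), Module.finrank ℝ ↥W = 3 ∧ PosDefOn W ∧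
      Projectivization.mk ℂ z hz ∈ twistorLine W ∧
      Projectivization.mk ℂ w hw ∈ twistorLine W) ↔
    (PosDefOn (Pspan z ⊔ Pspan w) ∧ Module.finrank ℝ ↥(Pspan z ⊔ Pspan w) ≤ 3) := by
  have hsig : 3 ≤ sigPos (QuadraticMap.weightedSumSquares ℝ (eps (b := b))) := by
    rw [sigPos_weightedSumSquares_eps, min_eq_right hb]
  simp only [posDefOn_iff_posDef_restrict, mk_mem_twistorLine_iff hz hz',
    mk_mem_twistorLine_iff hw hw', ← sup_le_iff]
  exact exists_finrank_eq_posDef_restrict_ge_iff hsig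
end
end

section
/- Let b ≥ 3, let Λ ⊆ ℝ^b be a countable additive subgroup, and let W ⊆ ℝ^b be a positive three-dimensional subspace. Then the following are equivalent: (i) W^⊥ ∩ Λ = {0}; (ii) there exists w ∈ W with w^⊥ ∩ Λ = {0}; (iii) there exists a nonzero z ∈ ℂ^b with Re z, Im z ∈ W, q(z) = 0, and ⟨z, α⟩ ≠ 0 for every α ∈ Λ \ {0}. -/
/-!
A moment curve `t ↦ ∑ tⁱ eᵢ` in `W` meets the kernel of a nonzero functional only at the roots of a
nonzero polynomial, so as `ℝ` is uncountable some `w ∈ W` avoids countably many such kernels at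
once: this turns (i) into (ii). For (ii) ⇒ (iii), complete `w` to an isotropic vector `z = w + i v`
by choosing `v ∈ W` orthogonal to `w` with `q v = q w`; if `⟨z, α⟩ = 0` then already `⟨w, α⟩ = 0`.
Finally, a functional `⟨·, α⟩` vanishing on `W` kills `z`, which gives (iii) ⇒ (i).
-/

noncomputable section

open scoped BigOperators

section CountableAvoidance

variable {R M N : Type*} [CommRing R] [IsDomain R] [Uncountable R]
  [AddCommGroup M] [Module R M] [AddCommGroup N] [Module R N]

open Polynomial in
theorem exists_forall_eval_ne_zero_of_countable {S : Set R[X]} (hS : S.Countable)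
    (h0 : ∀ p ∈ S, p ≠ 0) : ∃ t : R, ∀ p ∈ S, p.eval t ≠ 0 := by
  have hroots : (⋃ p ∈ S, {t | p.IsRoot t}).Countable :=
    hS.biUnion fun p hp => (finite_setOfPred_isRoot (h0 p hp)).countable
  obtain ⟨t, ht⟩ : ∃ t, t ∉ ⋃ p ∈ S, {t | p.IsRoot t} := by
    by_contra! hall
    exact Set.not_countable_univ (Set.eq_univ_of_forall hall ▸ hroots)
  exact ⟨t, fun p hp hpt => ht (Set.mem_biUnion hp hpt)⟩

theorem exists_forall_dual_apply_ne_zero_of_countable [Module.Free R M] [Module.Finite R M]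
    {S : Set (Module.Dual R M)} (hS : S.Countable) (h0 : ∀ f ∈ S, f ≠ 0) :
    ∃ x : M, ∀ f ∈ S, f x ≠ 0 := by
  classical
  let e := Module.finBasis R M
  let p (f : Module.Dual R M) : Polynomial R := Polynomial.ofFn _ fun i => f (e i)
  have hp_ne : ∀ q ∈ p '' S, q ≠ 0 := by
    rintro _ ⟨f, hf, rfl⟩ hpf
    refine h0 f hf (e.ext fun i => ?_)
    exact congrFun ((map_eq_zero_iff _ (Polynomial.injective_ofFn _)).mp hpf) i
  obtain ⟨t, ht⟩ := exists_forall_eval_ne_zero_of_countable (hS.image p) hp_ne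
  have heval (f : Module.Dual R M) : f (∑ i : Fin _, t ^ (i : ℕ) • e i) = (p f).eval t := by
    simp only [p, map_sum, map_smul, smul_eq_mul, Polynomial.ofFn_eq_sum_monomial,
      Polynomial.eval_finsetSum, Polynomial.eval_monomial, mul_comm]
  exact ⟨_, fun f hf => heval f ▸ ht _ (Set.mem_image_of_mem p hf)⟩

theorem forall_orthogonal_eq_zero_iff_exists_mem (B : M →ₗ[R] N →ₗ[R] R) (W : Submodule R M)
    [Module.Free R W] [Module.Finite R W] {Λ : Set N} (hΛ : Λ.Countable) :
    (∀ α ∈ Λ, (∀ w ∈ W, B w α = 0) → α = 0) ↔ ∃ w ∈ W, ∀ α ∈ Λ, B w α = 0 → α = 0 := by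
  refine ⟨fun hgen => ?_, fun ⟨w, hw, h⟩ α hα hαW => h α hα (hαW w hw)⟩
  let φ (α : N) : Module.Dual R W := (B.flip α).comp W.subtype
  have hφ_ne : ∀ f ∈ φ '' (Λ \ {0}), f ≠ 0 := by
    rintro _ ⟨α, ⟨hα, hα0⟩, rfl⟩ hφα
    exact hα0 (hgen α hα fun w hw => DFunLike.congr_fun hφα ⟨w, hw⟩)
  obtain ⟨w, hw⟩ := exists_forall_dual_apply_ne_zero_of_countable
    ((hΛ.mono Set.sdiff_subset).image φ) hφ_ne
  refine ⟨w, w.2, fun α hα hwα => ?_⟩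
  by_contra hα0
  exact hw _ (Set.mem_image_of_mem φ ⟨hα, hα0⟩) hwα

end CountableAvoidance

section PositiveDefinite

open Module (finrank)

variable {V : Type*} [AddCommGroup V] [Module ℝ V] {B : LinearMap.BilinForm ℝ V}

theorem exists_apply_eq_zero_and_apply_self_eq (hV : 1 < finrank ℝ V)
    (hpos : ∀ v, v ≠ 0 → 0 < B v v) (w : V) : ∃ v, B w v = 0 ∧ B v v = B w w := by
  have : FiniteDimensional ℝ V := Module.finite_of_finrank_pos (zero_lt_one.trans hV)
  obtain ⟨v, hwv, hv0⟩ := Submodule.exists_mem_ne_zero_of_ne_bot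
    ((B w).ker_ne_bot_of_finrank_lt (by rwa [Module.finrank_self]))
  have hvv : 0 < B v v := hpos v hv0
  have hww : 0 ≤ B w w := by
    rcases eq_or_ne w 0 with rfl | hw0
    · simp only [map_zero, le_refl]
    · exact (hpos w hw0).le
  refine ⟨√(B w w / B v v) • v, by rw [map_smul, LinearMap.mem_ker.mp hwv, smul_zero], ?_⟩
  rw [map_smul, map_smul, LinearMap.smul_apply, smul_smul, Real.mul_self_sqrt (by positivity),
    smul_eq_mul, div_mul_cancel₀ _ hvv.ne']

theorem exists_isotropic_pair_of_exists_mem {W : Submodule ℝ V} (hdim : 1 < finrank ℝ W)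
    (hpos : ∀ v ∈ W, v ≠ 0 → 0 < B v v) {Λ : Set V}
    (h : ∃ w ∈ W, ∀ α ∈ Λ, B w α = 0 → α = 0) :
    ∃ z : V × V, z ≠ 0 ∧ z.1 ∈ W ∧ z.2 ∈ W ∧ (B z.1 z.1 = B z.2 z.2 ∧ B z.1 z.2 = 0) ∧
      ∀ α ∈ Λ, α ≠ 0 → ¬(B z.1 α = 0 ∧ B z.2 α = 0) := by
  obtain ⟨w, hwW, hw0, hw⟩ : ∃ w ∈ W, w ≠ 0 ∧ ∀ α ∈ Λ, B w α = 0 → α = 0 := by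
    obtain ⟨w, hwW, hw⟩ := h
    rcases eq_or_ne w 0 with rfl | hw0
    · have : Nontrivial W := Module.nontrivial_of_finrank_pos (zero_lt_one.trans hdim)
      obtain ⟨⟨u, huW⟩, hu0⟩ := exists_ne (0 : W)
      refine ⟨u, huW, fun hu => hu0 (Subtype.ext hu), fun α hα _ => hw α hα ?_⟩
      rw [map_zero, LinearMap.zero_apply]
    · exact ⟨w, hwW, hw0, hw⟩
  obtain ⟨v, hwv, hvv⟩ := exists_apply_eq_zero_and_apply_self_eq (B := B.restrict W) hdim
    (fun v hv => hpos v v.2 fun h => hv (Subtype.ext h)) ⟨w, hwW⟩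
  exact ⟨(w, v), fun h => hw0 (congrArg Prod.fst h), hwW, v.2, ⟨hvv.symm, hwv⟩,
    fun α hα hα0 hz => hα0 (hw α hα hz.1)⟩

/-- A pair `z = (u, v)` stands for the vector `u + i v` of the complexification of `V`. -/
theorem stmt7_general (hB : B.IsSymm) {W : Submodule ℝ V} (hdim : 1 < finrank ℝ W)
    (hpos : ∀ v ∈ W, v ≠ 0 → 0 < B v v) {Λ : Set V} (hΛ : Λ.Countable) :
    ((∀ α ∈ Λ, (∀ w ∈ W, B α w = 0) → α = 0) ↔ ∃ w ∈ W, ∀ α ∈ Λ, B w α = 0 → α = 0) ∧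
    ((∀ α ∈ Λ, (∀ w ∈ W, B α w = 0) → α = 0) ↔
      ∃ z : V × V, z ≠ 0 ∧ z.1 ∈ W ∧ z.2 ∈ W ∧ (B z.1 z.1 = B z.2 z.2 ∧ B z.1 z.2 = 0) ∧
        ∀ α ∈ Λ, α ≠ 0 → ¬(B z.1 α = 0 ∧ B z.2 α = 0)) := by
  have : FiniteDimensional ℝ W := Module.finite_of_finrank_pos (zero_lt_one.trans hdim)
  have hgen : (∀ α ∈ Λ, (∀ w ∈ W, B α w = 0) → α = 0) ↔
      ∃ w ∈ W, ∀ α ∈ Λ, B w α = 0 → α = 0 := by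
    simpa only [hB.eq] using forall_orthogonal_eq_zero_iff_exists_mem B W hΛ
  refine ⟨hgen, fun h => exists_isotropic_pair_of_exists_mem hdim hpos (hgen.mp h), ?_⟩
  rintro ⟨⟨u, v⟩, -, hu, hv, -, hz⟩ α hα hαW
  by_contra hα0
  exact hz α hα hα0 ⟨(hB.eq α u).symm.trans (hαW u hu), (hB.eq α v).symm.trans (hαW v hv)⟩

end PositiveDefinite

section Coordinates

variable {b : ℕ}

/-- The form `bR` bundled as a bilinear form, so that results on bilinear forms apply to it. -/
def bRForm (b : ℕ) : LinearMap.BilinForm ℝ (Fin b → ℝ) :=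
  LinearMap.mk₂ ℝ bR (fun v v' w => (bRlin w).map_add v v') (fun c v w => (bRlin w).map_smul c v)
    (fun v w w' => by
      rw [bR_comm v, bR_comm v, bR_comm v]; exact (bRlin v).map_add w w')
    (fun c v w => by
      rw [bR_comm v, bR_comm v]; exact (bRlin v).map_smul c w)

theorem isSymm_bRForm (b : ℕ) : (bRForm b).IsSymm :=
  ⟨bR_comm⟩

theorem re_bC (z w : Fin b → ℂ) :
    (bC z w).re = bR (rePart z) (rePart w) - bR (imPart z) (imPart w) := by
  simp only [bC, bR, rePart, imPart, Complex.re_sum, ← Finset.sum_sub_distrib, mul_assoc,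
    Complex.mul_re, Complex.ofReal_re, Complex.ofReal_im, zero_mul, sub_zero, mul_sub]

theorem im_bC (z w : Fin b → ℂ) :
    (bC z w).im = bR (rePart z) (imPart w) + bR (imPart z) (rePart w) := by
  simp only [bC, bR, rePart, imPart, Complex.im_sum, ← Finset.sum_add_distrib, mul_assoc,
    Complex.mul_im, Complex.ofReal_re, Complex.ofReal_im, zero_mul, add_zero, mul_add]

theorem qC_eq_zero_iff (z : Fin b → ℂ) :
    qC z = 0 ↔ bR (rePart z) (rePart z) = bR (imPart z) (imPart z) ∧
      bR (rePart z) (imPart z) = 0 := by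
  rw [qC, Complex.ext_iff, re_bC, im_bC, bR_comm (imPart z) (rePart z),
    Complex.zero_re, Complex.zero_im, sub_eq_zero, add_self_eq_zero]

theorem bC_cplx_eq_zero_iff (z : Fin b → ℂ) (α : Fin b → ℝ) :
    bC z (cplx α) = 0 ↔ bR (rePart z) α = 0 ∧ bR (imPart z) α = 0 := by
  have hre : rePart (cplx α) = α := rfl
  have him : imPart (cplx α) = 0 := rfl
  have hzero (v : Fin b → ℝ) : bR v 0 = 0 := (bRForm b v).map_zero
  rw [Complex.ext_iff, re_bC, im_bC, hre, him, hzero, hzero, sub_zero, zero_add,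
    Complex.zero_re, Complex.zero_im]

/-- The identification of `ℂ^b` with `ℝ^b × ℝ^b` by real and imaginary parts, used to restate
condition (iii) in terms of pairs of real vectors. -/
def rePartImPartEquiv (b : ℕ) : (Fin b → ℂ) ≃ (Fin b → ℝ) × (Fin b → ℝ) where
  toFun z := (rePart z, imPart z)
  invFun x i := ⟨x.1 i, x.2 i⟩

theorem rePartImPartEquiv_eq_zero_iff (z : Fin b → ℂ) : rePartImPartEquiv b z = 0 ↔ z = 0 :=
  (rePartImPartEquiv b).injective.eq_iff' rfl

theorem exists_isotropic_iff_exists_pair (Λ : Set (Fin b → ℝ)) (W : Submodule ℝ (Fin b → ℝ)) :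
    (∃ z : Fin b → ℂ, z ≠ 0 ∧ rePart z ∈ W ∧ imPart z ∈ W ∧ qC z = 0 ∧
      ∀ α ∈ Λ, α ≠ 0 → bC z (cplx α) ≠ 0) ↔
    ∃ x : (Fin b → ℝ) × (Fin b → ℝ), x ≠ 0 ∧ x.1 ∈ W ∧ x.2 ∈ W ∧
      (bR x.1 x.1 = bR x.2 x.2 ∧ bR x.1 x.2 = 0) ∧
      ∀ α ∈ Λ, α ≠ 0 → ¬(bR x.1 α = 0 ∧ bR x.2 α = 0) :=
  (rePartImPartEquiv b).exists_congr fun z => by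
    simp only [ne_eq, qC_eq_zero_iff, bC_cplx_eq_zero_iff, rePartImPartEquiv_eq_zero_iff]
    rfl

end Coordinates

/-- equivalent characterizations of genericity of a positive three-space. -/
theorem stmt7 (b : ℕ) (hb : 3 ≤ b) (Λ : AddSubgroup (Fin b → ℝ))
    (hΛ : (Λ : Set (Fin b → ℝ)).Countable)
    (W : Submodule ℝ (Fin b → ℝ)) (hdim : Module.finrank ℝ ↥W = 3) (hpos : PosDefOn W) :
    (IsGenericW Λ W ↔ ∃ w ∈ W, ∀ α ∈ Λ, bR w α = 0 → α = 0) ∧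
    (IsGenericW Λ W ↔ ∃ z : Fin b → ℂ, z ≠ 0 ∧ rePart z ∈ W ∧ imPart z ∈ W ∧ qC z = 0 ∧
      ∀ α ∈ Λ, α ≠ 0 → bC z (cplx α) ≠ 0) := by
  have h := stmt7_general (isSymm_bRForm b) (by omega) hpos hΛ
  exact ⟨h.1, h.2.trans (exists_isotropic_iff_exists_pair _ W).symm⟩
end
end
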